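/- Let N' be an odd positive integer and let π: ℤ → ℤ/N'ℤ be the reduction map. For f: ℤ/N'ℤ → ℂ, define its lift f̃: ℤ → ℂ by f̃(n) = f(n mod N') for n ∈ [−(N'−1)/2, (N'−1)/2] and f̃(n) = 0 otherwise. Suppose f is supported on π([1, (N'−1)/2]) and g is supported on π([−⌊N'/4⌋, ⌊N'/4⌋]). Then ∑_{n ∈ ℤ/N'ℤ} |(f ∗ g)(n)|² = ∑_{n ∈ ℤ} |(f̃ ∗ g̃)(n)|², where f ∗ g is the cyclic convolution on ℤ/N'ℤ and f̃ ∗ g̃ is the convolution on ℤ. -/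

import Mathlib

open scoped Classical

/-!
The sums of a point of `[1, (N' − 1) / 2]` and a point of `[−⌊N'/4⌋, ⌊N'/4⌋]` lie in an interval of
at most `N'` integers, on which reduction modulo `N'` is injective. So for `n` in this interval a
nonzero product `f (π m) * g (π n − π m)` can only come from a sum equal to `n` in `ℤ`, not merely
modulo `N'`: nothing wraps around, and `f̃ ∗ g̃` takes the same nonzero values as `f ∗ g`.
-/

open Function Set
open scoped Pointwise

section Lift

variable {X Y G H R M : Type*}

/-- `F : X → R` is a lift of `f : Y → R` along `φ : X → Y`: `φ` carries the nonzero values of `F`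
bijectively to those of `f`. It makes sums over `X` and over `Y` comparable. The set `s` on which
`φ` is injective is explicit and may be larger than the support of `F`, so that a lift of a
convolution can be placed on a sumset. -/
structure IsLiftOn [Zero R] (φ : X → Y) (s : Set X) (F : X → R) (f : Y → R) : Prop where
  injOn : InjOn φ s
  apply_eq : ∀ x ∈ s, f (φ x) = F x
  support_subset : support F ⊆ s
  support_subset_image : support f ⊆ φ '' s

theorem isLiftOn_indicator_comp [Zero R] {φ : X → Y} {s w : Set X} {f : Y → R}
    (hφ : InjOn φ w) (hsw : s ⊆ w) (hf : support f ⊆ φ '' s) :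
    IsLiftOn φ s (w.indicator (f ∘ φ)) f where
  injOn := hφ.mono hsw
  apply_eq _ hx := (indicator_of_mem (hsw hx) (f ∘ φ)).symm
  support_subset x hx := by
    obtain ⟨hxw, hfx⟩ := indicator_apply_ne_zero.mp hx
    exact (hφ.mem_image_iff hsw hxw).mp (hf hfx)
  support_subset_image := hf

theorem support_tsum_mul_sub_subset [AddCommGroup G] [NonUnitalNonAssocSemiring R]
    [TopologicalSpace R] (F₁ F₂ : G → R) :
    support (fun x ↦ ∑' a, F₁ a * F₂ (x - a)) ⊆ support F₁ + support F₂ := by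
  intro x hx
  obtain ⟨a, ha⟩ : ∃ a, F₁ a * F₂ (x - a) ≠ 0 := by
    contrapose! hx
    simp [hx]
  exact ⟨a, left_ne_zero_of_mul ha, x - a, right_ne_zero_of_mul ha, add_sub_cancel a x⟩

namespace IsLiftOn

theorem comp_left [Zero R] [Zero M] {φ : X → Y} {s : Set X} {F : X → R} {f : Y → R}
    (h : IsLiftOn φ s F f) {ψ : R → M} (hψ : ψ 0 = 0) : IsLiftOn φ s (ψ ∘ F) (ψ ∘ f) where
  injOn := h.injOn
  apply_eq x hx := congrArg ψ (h.apply_eq x hx)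
  support_subset := (support_comp_subset hψ F).trans h.support_subset
  support_subset_image := (support_comp_subset hψ f).trans h.support_subset_image

theorem tsum_eq [AddCommMonoid R] [TopologicalSpace R] {φ : X → Y} {s : Set X} {F : X → R}
    {f : Y → R} (h : IsLiftOn φ s F f) : ∑' y, f y = ∑' x, F x :=
  calc ∑' y, f y = ∑' y : φ '' s, f y :=
        (tsum_subtype_eq_of_support_subset h.support_subset_image).symm
    _ = ∑' x : s, f (φ x) := tsum_image f h.injOn
    _ = ∑' x : s, F x := tsum_congr fun x ↦ h.apply_eq x x.2
    _ = ∑' x, F x := tsum_subtype_eq_of_support_subset h.support_subset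

section Convolution

variable [AddCommGroup G] [AddCommGroup H] [NonUnitalNonAssocSemiring R] {φ : G →+ H}
  {s t : Set G} {F₁ F₂ : G → R} {f₁ f₂ : H → R}

theorem apply_map_sub (h₂ : IsLiftOn φ t F₂ f₂) (hst : InjOn φ (s + t)) {x a : G}
    (hx : x ∈ s + t) (ha : a ∈ s) : f₂ (φ x - φ a) = F₂ (x - a) := by
  by_cases hxa : x - a ∈ t
  · rw [← map_sub, h₂.apply_eq _ hxa]
  · rw [notMem_support.mp (notMem_subset h₂.support_subset hxa)]
    by_contra hne
    obtain ⟨b, hb, hφb⟩ := h₂.support_subset_image hne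
    have hφx : φ x = φ (a + b) := by rw [map_add, hφb, add_sub_cancel]
    have hxab : x = a + b := hst hx (add_mem_add ha hb) hφx
    exact hxa (by rwa [hxab, add_sub_cancel_left])

theorem mul_comp_sub (h₁ : IsLiftOn φ s F₁ f₁) (h₂ : IsLiftOn φ t F₂ f₂) (hst : InjOn φ (s + t))
    {x : G} (hx : x ∈ s + t) :
    IsLiftOn φ s (fun a ↦ F₁ a * F₂ (x - a)) (fun y ↦ f₁ y * f₂ (φ x - y)) where
  injOn := h₁.injOn
  apply_eq a ha := congrArg₂ (· * ·) (h₁.apply_eq a ha) (h₂.apply_map_sub hst hx ha)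
  support_subset := (support_mul_subset_left _ _).trans h₁.support_subset
  support_subset_image := (support_mul_subset_left _ _).trans h₁.support_subset_image

theorem convolution [TopologicalSpace R] (h₁ : IsLiftOn φ s F₁ f₁) (h₂ : IsLiftOn φ t F₂ f₂)
    (hst : InjOn φ (s + t)) :
    IsLiftOn φ (s + t) (fun x ↦ ∑' a, F₁ a * F₂ (x - a)) (fun y ↦ ∑' z, f₁ z * f₂ (y - z)) where
  injOn := hst
  apply_eq _ hx := (h₁.mul_comp_sub h₂ hst hx).tsum_eq
  support_subset := (support_tsum_mul_sub_subset F₁ F₂).trans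
    (add_subset_add h₁.support_subset h₂.support_subset)
  support_subset_image := (support_tsum_mul_sub_subset f₁ f₂).trans <| by
    rw [image_add]
    exact add_subset_add h₁.support_subset_image h₂.support_subset_image

end Convolution

end IsLiftOn

end Lift

theorem intCast_injOn_Icc {N : ℕ} {a b : ℤ} (hab : b < a + N) :
    InjOn (Int.cast : ℤ → ZMod N) (Icc a b) := by
  intro x hx y hy hxy
  have hdvd : (N : ℤ) ∣ y - x := (ZMod.intCast_eq_intCast_iff_dvd_sub x y N).mp hxy
  have habs : |y - x| < N := by
    rw [mem_Icc] at hx hy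
    rw [abs_lt]
    omega
  exact (sub_eq_zero.mp (Int.eq_zero_of_abs_lt_dvd hdvd habs)).symm

theorem isLiftOn_intCast_ite {N : ℕ} {R : Type*} [Zero R] {a b u v : ℤ} (huv : v < u + N)
    (hua : u ≤ a) (hbv : b ≤ v) {f : ZMod N → R}
    (hf : ∀ n, f n ≠ 0 → ∃ m : ℤ, a ≤ m ∧ m ≤ b ∧ (m : ZMod N) = n) :
    IsLiftOn (Int.castAddHom (ZMod N)) (Icc a b)
      (fun n : ℤ ↦ if u ≤ n ∧ n ≤ v then f n else 0) f := by
  have hsupp : support f ⊆ Int.castAddHom (ZMod N) '' Icc a b := fun n hn ↦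
    let ⟨m, ham, hmb, hmn⟩ := hf n hn
    ⟨m, ⟨ham, hmb⟩, hmn⟩
  have hite : (Icc u v).indicator (f ∘ Int.castAddHom (ZMod N)) =
      fun n : ℤ ↦ if u ≤ n ∧ n ≤ v then f n else 0 := by
    funext n
    simp only [indicator_apply, mem_Icc, comp_apply, Int.coe_castAddHom]
  exact hite ▸ isLiftOn_indicator_comp (intCast_injOn_Icc huv) (Icc_subset_Icc hua hbv) hsupp

theorem cyclic_convolution_l2_lift_general {N : ℕ} [NeZero N] {R : Type*}
    [NonUnitalSeminormedRing R] {a b c d u v : ℤ} (huv : v < u + N) (hua : u ≤ a) (hbv : b ≤ v)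
    (huc : u ≤ c) (hdv : d ≤ v) (hsum : b + d < a + c + N) {f g : ZMod N → R}
    (hf : ∀ n, f n ≠ 0 → ∃ m : ℤ, a ≤ m ∧ m ≤ b ∧ (m : ZMod N) = n)
    (hg : ∀ n, g n ≠ 0 → ∃ m : ℤ, c ≤ m ∧ m ≤ d ∧ (m : ZMod N) = n) {ftilde gtilde : ℤ → R}
    (hft : ftilde = fun n : ℤ ↦ if u ≤ n ∧ n ≤ v then f n else 0)
    (hgt : gtilde = fun n : ℤ ↦ if u ≤ n ∧ n ≤ v then g n else 0) :
    ∑ n, ‖∑ m, f m * g (n - m)‖ ^ 2 = ∑' n, ‖∑' m, ftilde m * gtilde (n - m)‖ ^ 2 := by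
  have hf_lift := hft ▸ isLiftOn_intCast_ite huv hua hbv hf
  have hg_lift := hgt ▸ isLiftOn_intCast_ite huv huc hdv hg
  have hinj : InjOn (Int.castAddHom (ZMod N)) (Icc a b + Icc c d) :=
    (intCast_injOn_Icc hsum).mono (Icc_add_Icc_subset a b c d)
  have hnorm := (hf_lift.convolution hg_lift hinj).comp_left (ψ := fun z ↦ ‖z‖ ^ 2) (by simp)
  simpa only [comp_def, tsum_fintype] using hnorm.tsum_eq

/-- **Cyclic and integer convolutions agree in `ℓ²` for suitably supported functions.**
Let `N'` be odd, `f` supported on `π([1,(N'−1)/2])`, `g` supported on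
`π([−⌊N'/4⌋, ⌊N'/4⌋])`, and let `f̃, g̃` be the lifts to `ℤ` supported on
`[−(N'−1)/2, (N'−1)/2]`. Then `∑_{n ∈ ℤ/N'ℤ} |(f∗g)(n)|² = ∑_{n ∈ ℤ} |(f̃∗g̃)(n)|²`. -/
theorem cyclic_convolution_l2_lift (N' : ℕ) [NeZero N'] (hodd : Odd N')
    (f g : ZMod N' → ℂ)
    (hf : ∀ n : ZMod N', f n ≠ 0 →
      ∃ m : ℤ, 1 ≤ m ∧ m ≤ ((N' : ℤ) - 1) / 2 ∧ (m : ZMod N') = n)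
    (hg : ∀ n : ZMod N', g n ≠ 0 →
      ∃ m : ℤ, -((N' : ℤ) / 4) ≤ m ∧ m ≤ (N' : ℤ) / 4 ∧ (m : ZMod N') = n)
    (ftilde gtilde : ℤ → ℂ)
    (hft : ftilde = fun n : ℤ =>
      if -(((N' : ℤ) - 1) / 2) ≤ n ∧ n ≤ ((N' : ℤ) - 1) / 2 then f (n : ZMod N') else 0)
    (hgt : gtilde = fun n : ℤ =>
      if -(((N' : ℤ) - 1) / 2) ≤ n ∧ n ≤ ((N' : ℤ) - 1) / 2 then g (n : ZMod N') else 0) :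
    ∑ n : ZMod N', ‖∑ m : ZMod N', f m * g (n - m)‖ ^ 2 =
      ∑' n : ℤ, ‖∑' m : ℤ, ftilde m * gtilde (n - m)‖ ^ 2 := by
  have hN : 0 < N' := Nat.pos_of_neZero N'
  exact cyclic_convolution_l2_lift_general (by omega) (by omega) le_rfl (by omega) (by omega)
    (by omega) hf hg hft hgt
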